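/- Let A be a real m×n matrix, b ∈ ℝᵐ, u ∈ ℝⁿ, τ > 0, and let X = I₁ × ⋯ × Iₙ ⊆ ℝⁿ be a box with each Iᵢ ∈ T₁ ∪ T₂; assume X ∩ {x : Ax = b} ≠ ∅ and let x* be the unique minimizer of x ↦ ‖x‖₁ + (1/(2τ))‖x − u‖₂² over X ∩ {x : Ax = b}. Define s : ℝᵐ → ℝⁿ componentwise by s(y)ᵢ = [τ·shrink(τ⁻¹uᵢ + (Aᵀy)ᵢ)]_{Iᵢ}⁺. Then for every y ∈ ℝᵐ, A·s(y) = b if and only if s(y) = x*; that is, {y : A·s(y) = b} = {y : s(y) = x*}. -/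

import Mathlib

/-!
For fixed `y` put `q = Aᵀ y`. Minimizing the Lagrangian
`x ↦ ‖x‖₁ + ‖x - u‖² / (2τ) - ⟪q, x⟫` over the box splits into scalar convex problems. The
unconstrained minimizer of each is `τ * shrink (u i / τ + q i)`, and for a convex function of one
variable the minimizer over an interval is the projection of the unconstrained one. So `S y`
minimizes the Lagrangian over `X`; `IsProjR.subgradient_le` is the first-order form of this.

On `{x | A x = b}` the term `⟪q, x⟫ = ⟪y, A x⟫` is constant. Hence, if `A (S y) = b`, strong
convexity gives `F xs ≥ F (S y) + ‖xs - S y‖² / (2τ)` for the objective `F`, while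
`F xs ≤ F (S y)` by minimality of `xs`, so that `S y = xs`.
-/

noncomputable section

open scoped RealInnerProductSpace

/-- The shrinkage operator `shrink(s) = sign(s) * max (|s| - 1) 0`. -/
def shrink (s : ℝ) : ℝ := Real.sign s * max (|s| - 1) 0

/-- `IsProjR I w p` : `p` is the projection of `w` onto `I ⊆ ℝ`. -/
def IsProjR (I : Set ℝ) (w p : ℝ) : Prop := p ∈ I ∧ ∀ t ∈ I, |p - w| ≤ |t - w|

/-- Membership in the class `T₁` of intervals. -/
def InT1 (I : Set ℝ) : Prop :=
  (∃ c : ℝ, 0 < c ∧ I = Set.Ici c) ∨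
  (∃ c : ℝ, c < 0 ∧ I = Set.Iic c) ∨
  (∃ c d : ℝ, 0 < c ∧ c < d ∧ I = Set.Icc c d) ∨
  (∃ c d : ℝ, d < c ∧ c < 0 ∧ I = Set.Icc d c)

/-- Membership in the class `T₂` of intervals. -/
def InT2 (I : Set ℝ) : Prop := ∃ c d : ℝ, c < 0 ∧ 0 < d ∧ I = Set.Icc c d

/-- The ℓ²→ℓ² operator norm of a matrix. -/
def opNorm {m n : ℕ} (A : Matrix (Fin m) (Fin n) ℝ) : ℝ :=
  ‖LinearMap.toContinuousLinearMap (Matrix.toEuclideanLin A)‖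

/-- The residual `v - shrink v` is a subgradient of `|·|` at `shrink v`. -/
lemma shrink_residual (v : ℝ) :
    |v - shrink v| ≤ 1 ∧ (0 < shrink v → v - shrink v = 1) ∧
      (shrink v < 0 → v - shrink v = -1) := by
  rcases lt_or_ge 1 v with h | h
  · have e : shrink v = v - 1 := by
      unfold shrink
      rw [Real.sign_of_pos (by linarith), abs_of_pos (by linarith), max_eq_left (by linarith)]
      ring
    rw [e]
    refine ⟨by norm_num, fun _ => by ring, fun h' => by linarith⟩
  rcases lt_or_ge v (-1) with h' | h'
  · have e : shrink v = v + 1 := by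
      unfold shrink
      rw [Real.sign_of_neg (by linarith), abs_of_neg (by linarith), max_eq_left (by linarith)]
      ring
    rw [e]
    refine ⟨by norm_num, fun h => by linarith, fun _ => by ring⟩
  · have hv : |v| ≤ 1 := abs_le.2 ⟨h', h⟩
    have e : shrink v = 0 := by
      unfold shrink
      rw [max_eq_right (by linarith), mul_zero]
    rw [e]
    exact ⟨by simpa using hv, fun h => absurd h (lt_irrefl _), fun h => absurd h (lt_irrefl _)⟩

lemma ordConnected_of_inT1_or_inT2 {I : Set ℝ} (h : InT1 I ∨ InT2 I) : I.OrdConnected := by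
  rcases h with (⟨c, _, rfl⟩ | ⟨c, _, rfl⟩ | ⟨c, d, _, _, rfl⟩ | ⟨c, d, _, _, rfl⟩) |
    ⟨c, d, _, _, rfl⟩
  · exact Set.ordConnected_Ici
  · exact Set.ordConnected_Iic
  all_goals exact Set.ordConnected_Icc

lemma IsProjR.le_of_lt {I : Set ℝ} (hI : I.OrdConnected) {w p t : ℝ} (hp : IsProjR I w p)
    (hw : w < p) (ht : t ∈ I) : p ≤ t := by
  by_contra! h
  rcases le_or_gt w t with h1 | h1
  · have := hp.2 t ht
    rw [abs_of_pos (by linarith), abs_of_nonneg (by linarith)] at this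
    linarith
  · have := hp.2 w (hI.out ht hp.1 ⟨h1.le, hw.le⟩)
    rw [abs_of_pos (by linarith), sub_self, abs_zero] at this
    linarith

lemma IsProjR.le_of_gt {I : Set ℝ} (hI : I.OrdConnected) {w p t : ℝ} (hp : IsProjR I w p)
    (hw : p < w) (ht : t ∈ I) : t ≤ p := by
  by_contra! h
  rcases le_or_gt t w with h1 | h1
  · have := hp.2 t ht
    rw [abs_of_neg (by linarith), abs_of_nonpos (by linarith)] at this
    linarith
  · have := hp.2 w (hI.out hp.1 ht ⟨hw.le, h1.le⟩)
    rw [abs_of_neg (by linarith), sub_self, abs_zero] at this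
    linarith

/-- First-order optimality of `p` for `t ↦ |t| + t ^ 2 / (2τ) - v * t` over the interval `I`. -/
lemma IsProjR.subgradient_le {I : Set ℝ} (hI : I.OrdConnected) {τ v p t : ℝ} (hτ : 0 < τ)
    (hp : IsProjR I (τ * shrink v) p) (ht : t ∈ I) :
    (v - τ⁻¹ * p) * (t - p) ≤ |t| - |p| := by
  obtain ⟨hg, hpos, hneg⟩ := shrink_residual v
  have hg' := abs_le.1 hg
  have hi : 0 < τ⁻¹ := inv_pos.2 hτ
  have hs : τ⁻¹ * (τ * shrink v) = shrink v := by field_simp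
  rcases lt_trichotomy (τ * shrink v) p with h | h | h
  · have htp := hp.le_of_lt hI h ht
    have h1 : shrink v < τ⁻¹ * p := by rw [← hs]; exact mul_lt_mul_of_pos_left h hi
    rcases lt_or_ge p 0 with h0 | h0
    · have h2 : shrink v < 0 := h1.trans (mul_neg_of_pos_of_neg hi h0)
      have h3 := hneg h2
      rw [abs_of_neg h0]
      nlinarith [neg_abs_le t]
    · rw [abs_of_nonneg h0, abs_of_nonneg (h0.trans htp)]
      nlinarith
  · have h1 : τ⁻¹ * p = shrink v := by rw [← h, hs]
    rw [h1]
    have h2 : (v - shrink v) * p = |p| := by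
      rcases lt_trichotomy (shrink v) 0 with h0 | h0 | h0
      · rw [hneg h0, ← h, abs_of_neg (mul_neg_of_pos_of_neg hτ h0)]; ring
      · rw [← h, h0]; simp
      · rw [hpos h0, ← h, abs_of_pos (mul_pos hτ h0)]; ring
    have h3 : (v - shrink v) * t ≤ |t| :=
      (le_abs_self _).trans (by
        rw [abs_mul]; exact mul_le_of_le_one_left (abs_nonneg _) hg)
    linarith [mul_sub (v - shrink v) t p]
  · have htp := hp.le_of_gt hI h ht
    have h1 : τ⁻¹ * p < shrink v := by rw [← hs]; exact mul_lt_mul_of_pos_left h hi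
    rcases lt_or_ge 0 p with h0 | h0
    · have h2 : 0 < shrink v := (mul_pos hi h0).trans h1
      have h3 := hpos h2
      rw [abs_of_pos h0]
      nlinarith [le_abs_self t]
    · rw [abs_of_nonpos h0, abs_of_nonpos (htp.trans h0)]
      nlinarith

/-- The `i`-th coordinates of `Aᵀ y` and `x` pair to `⟪y, A x⟫` when summed. -/
lemma sum_transpose_mul {m n : ℕ} (A : Matrix (Fin m) (Fin n) ℝ)
    (y : EuclideanSpace ℝ (Fin m)) (x : EuclideanSpace ℝ (Fin n)) :
    ∑ i, Matrix.toEuclideanLin A.transpose y i * x i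
      = ∑ j, y j * Matrix.toEuclideanLin A x j := by
  change (A.transpose.mulVec y.ofLp) ⬝ᵥ x.ofLp = y.ofLp ⬝ᵥ (A.mulVec x.ofLp)
  rw [Matrix.mulVec_transpose, Matrix.dotProduct_mulVec]

/-- the dual solution set `{y : A·s(y) = b}` coincides with
`{y : s(y) = x*}`, where `x*` is the unique minimizer of problem (cent). -/
theorem dual_solution_set_eq {m n : ℕ} (A : Matrix (Fin m) (Fin n) ℝ)
    (b : EuclideanSpace ℝ (Fin m)) (u : EuclideanSpace ℝ (Fin n))
    (τ : ℝ) (hτ : 0 < τ)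
    (I : Fin n → Set ℝ) (hI : ∀ i, InT1 (I i) ∨ InT2 (I i))
    (X : Set (EuclideanSpace ℝ (Fin n))) (hX : X = {x | ∀ i, x i ∈ I i})
    (xs : EuclideanSpace ℝ (Fin n)) (hxsX : xs ∈ X)
    (hxsb : Matrix.toEuclideanLin A xs = b)
    (hxsmin : ∀ x ∈ X, Matrix.toEuclideanLin A x = b →
      (∑ i, |xs i|) + (1 / (2 * τ)) * ‖xs - u‖ ^ 2 ≤
        (∑ i, |x i|) + (1 / (2 * τ)) * ‖x - u‖ ^ 2)
    (S : EuclideanSpace ℝ (Fin m) → EuclideanSpace ℝ (Fin n))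
    (hS : ∀ y i, IsProjR (I i)
      (τ * shrink (τ⁻¹ * u i + Matrix.toEuclideanLin A.transpose y i)) (S y i))
    (y : EuclideanSpace ℝ (Fin m)) :
    Matrix.toEuclideanLin A (S y) = b ↔ S y = xs := by
  constructor
  swap
  · rintro h
    rw [h, hxsb]
  intro hb
  subst hX
  set q := Matrix.toEuclideanLin A.transpose y with hq
  have hmin := hxsmin (S y) (fun i => (hS y i).1) hb
  have hqq : ∑ i, q i * xs i = ∑ i, q i * S y i := by
    rw [hq, sum_transpose_mul, sum_transpose_mul, hb, hxsb]
  have hsum : ∑ i, (τ⁻¹ * u i + q i - τ⁻¹ * S y i) * (xs i - S y i)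
      ≤ ∑ i, (|xs i| - |S y i|) :=
    Finset.sum_le_sum fun i _ =>
      (hS y i).subgradient_le (ordConnected_of_inT1_or_inT2 (hI i)) hτ (hxsX i)
  -- Completing the square turns the linear bound into the strong convexity inequality.
  have hid : ∑ i, (τ⁻¹ * u i + q i - τ⁻¹ * S y i) * (xs i - S y i)
      = (∑ i, q i * xs i - ∑ i, q i * S y i) + (1 / (2 * τ)) *
        (‖xs - S y‖ ^ 2 + ‖S y - u‖ ^ 2 - ‖xs - u‖ ^ 2) := by
    simp only [EuclideanSpace.real_norm_sq_eq, PiLp.sub_apply]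
    rw [← Finset.sum_sub_distrib, ← Finset.sum_add_distrib, ← Finset.sum_sub_distrib,
      Finset.mul_sum, ← Finset.sum_add_distrib]
    refine Finset.sum_congr rfl fun i _ => ?_
    field_simp
    ring
  rw [hid, hqq, Finset.sum_sub_distrib] at hsum
  have hle : (1 / (2 * τ)) * ‖xs - S y‖ ^ 2 ≤ 0 := by linarith
  have h0 : ‖xs - S y‖ ^ 2 ≤ 0 := nonpos_of_mul_nonpos_right hle (by positivity)
  have h1 : ‖xs - S y‖ = 0 := pow_eq_zero_iff two_ne_zero |>.1 (le_antisymm h0 (sq_nonneg _))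
  exact (sub_eq_zero.1 (norm_eq_zero.1 h1)).symm
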